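/- Let N be a positive integer, let E, A be real N×N matrices with E invertible, let δt > 0, let f : ℝ^N → ℝ^N be Lipschitz continuous with constant L ≥ 0, let g : ℕ → ℝ^N, and let x, x̃ : ℕ → ℝ^N be sequences such that E x^k = A x^{k−1} + δt (f(x^{k−1}) + g^k) for all k ≥ 1. Define the residual r^k := A x̃^{k−1} + δt (f(x̃^{k−1}) + g^k) − E x̃^k and the error e^k := x^k − x̃^k. Then for every k ≥ 1, ‖e^k‖₂ ≤ (‖E^{−1} A‖₂ + δt · L · ‖E^{−1}‖₂) · ‖e^{k−1}‖₂ + ‖E^{−1}‖₂ · ‖r^k‖₂. -/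

import Mathlib

open Matrix
open scoped Matrix.Norms.L2Operator

/-- Matrix-vector multiplication, viewed as a map on Euclidean space (so that the
Euclidean 2-norm is used on the result). -/
noncomputable def matVec {N : ℕ} (M : Matrix (Fin N) (Fin N) ℝ)
    (v : EuclideanSpace ℝ (Fin N)) : EuclideanSpace ℝ (Fin N) :=
  (EuclideanSpace.equiv (Fin N) ℝ).symm (M.mulVec v)

/-!
Subtracting the residual equation of `y` from the recursion for `x` gives
`E (x' - y') = A (x - y) + τ (f x - f y) + r`. Applying `E⁻¹` before taking norms keeps
`E⁻¹ A` together as a single operator, and the Lipschitz bound on `f` turns the nonlinear term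
into a multiple of the previous error.
-/

section ImplicitExplicit

/-- The residual `A x + τ (f x + u) - E x'` of a step from `x` to `x'` of the first-order
implicit-explicit scheme `E x' = A x + τ (f x + u)`, with step size `τ`, nonlinearity `f` and
forcing `u`. The sign is chosen so that the residual enters the error recursion with a plus. -/
def imexResidual {𝕜 X Y : Type*} [Semiring 𝕜] [AddCommGroup X] [AddCommGroup Y]
    [Module 𝕜 X] [Module 𝕜 Y] (E A : X →ₗ[𝕜] Y) (τ : 𝕜) (f : X → Y) (u : Y) (x x' : X) : Y :=
  A x + τ • (f x + u) - E x'

theorem map_sub_eq_add_imexResidual_sub {𝕜 X Y : Type*} [Semiring 𝕜] [AddCommGroup X]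
    [AddCommGroup Y] [Module 𝕜 X] [Module 𝕜 Y] (E A : X →ₗ[𝕜] Y) (τ : 𝕜) (f : X → Y) (u : Y)
    (x x' y y' : X) :
    E (x' - y') = A (x - y) + τ • (f x - f y) +
      (imexResidual E A τ f u y y' - imexResidual E A τ f u x x') := by
  simp only [imexResidual, map_sub, smul_add, smul_sub]
  abel

variable {𝕜 X Y : Type*} [NontriviallyNormedField 𝕜] [SeminormedAddCommGroup X]
  [SeminormedAddCommGroup Y] [NormedSpace 𝕜 X] [NormedSpace 𝕜 Y]

theorem norm_map_add_smul_add_le (A : X →L[𝕜] Y) (P : Y →L[𝕜] X) (τ : 𝕜) (v : X) (w r : Y) :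
    ‖P (A v + τ • w + r)‖ ≤ ‖P ∘L A‖ * ‖v‖ + ‖τ‖ * ‖P‖ * ‖w‖ + ‖P‖ * ‖r‖ :=
  calc ‖P (A v + τ • w + r)‖ = ‖(P ∘L A) v + τ • P w + P r‖ := by simp
    _ ≤ ‖(P ∘L A) v‖ + ‖τ • P w‖ + ‖P r‖ := norm_add₃_le
    _ ≤ ‖P ∘L A‖ * ‖v‖ + ‖τ‖ * (‖P‖ * ‖w‖) + ‖P‖ * ‖r‖ := by
      rw [norm_smul]
      gcongr <;> exact ContinuousLinearMap.le_opNorm _ _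
    _ = ‖P ∘L A‖ * ‖v‖ + ‖τ‖ * ‖P‖ * ‖w‖ + ‖P‖ * ‖r‖ := by rw [mul_assoc ‖τ‖]

theorem one_step_error_inequality_general {E : X →ₗ[𝕜] Y} {P : Y →L[𝕜] X}
    (hP : Function.LeftInverse P E) (A : X →L[𝕜] Y) (τ : 𝕜) {f : X → Y} {L : ℝ}
    (hf : ∀ v w, ‖f v - f w‖ ≤ L * ‖v - w‖) {u : Y} {x x' : X}
    (hx : E x' = A x + τ • (f x + u)) (y y' : X) :
    ‖x' - y'‖ ≤ (‖P ∘L A‖ + ‖τ‖ * L * ‖P‖) * ‖x - y‖ +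
      ‖P‖ * ‖imexResidual E A τ f u y y'‖ := by
  set r := imexResidual E A τ f u y y'
  have residual_eq_zero : imexResidual E A τ f u x x' = 0 := by simp [imexResidual, hx]
  have error_recursion : E (x' - y') = A (x - y) + τ • (f x - f y) + r := by
    simpa [residual_eq_zero] using map_sub_eq_add_imexResidual_sub E A τ f u x x' y y'
  calc ‖x' - y'‖ = ‖P (A (x - y) + τ • (f x - f y) + r)‖ := by rw [← error_recursion, hP]
    _ ≤ ‖P ∘L A‖ * ‖x - y‖ + ‖τ‖ * ‖P‖ * ‖f x - f y‖ + ‖P‖ * ‖r‖ :=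
      norm_map_add_smul_add_le A P τ _ _ r
    _ ≤ ‖P ∘L A‖ * ‖x - y‖ + ‖τ‖ * ‖P‖ * (L * ‖x - y‖) + ‖P‖ * ‖r‖ := by
      gcongr
      exact hf x y
    _ = (‖P ∘L A‖ + ‖τ‖ * L * ‖P‖) * ‖x - y‖ + ‖P‖ * ‖r‖ := by ring

end ImplicitExplicit

theorem leftInverse_toEuclideanCLM_inv {n 𝕜 : Type*} [Fintype n] [DecidableEq n] [RCLike 𝕜]
    {M : Matrix n n 𝕜} (hM : IsUnit M) :
    Function.LeftInverse (toEuclideanCLM (n := n) (𝕜 := 𝕜) M⁻¹)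
      (toEuclideanCLM (n := n) (𝕜 := 𝕜) M) := fun v ↦ by
  rw [← mul_apply_eq_comp, ← map_mul,
    nonsing_inv_mul M ((isUnit_iff_isUnit_det M).mp hM), map_one, one_apply_eq_self]

theorem matVec_eq_toEuclideanCLM {N : ℕ} (M : Matrix (Fin N) (Fin N) ℝ)
    (v : EuclideanSpace ℝ (Fin N)) :
    matVec M v = toEuclideanCLM (n := Fin N) (𝕜 := ℝ) M v :=
  rfl

/-- The one-step residual-based error inequality
`‖e^k‖ ≤ (‖E⁻¹A‖ + δt L ‖E⁻¹‖) ‖e^{k-1}‖ + ‖E⁻¹‖ ‖r^k‖`. -/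
theorem one_step_error_inequality
    (N : ℕ) (hN : 0 < N)
    (E A : Matrix (Fin N) (Fin N) ℝ) (hE : IsUnit E)
    (δt : ℝ) (hδt : 0 < δt)
    (f : EuclideanSpace ℝ (Fin N) → EuclideanSpace ℝ (Fin N))
    (L : ℝ) (hL : 0 ≤ L)
    (hf : ∀ v w : EuclideanSpace ℝ (Fin N), ‖f v - f w‖ ≤ L * ‖v - w‖)
    (g x xt : ℕ → EuclideanSpace ℝ (Fin N))
    (hx : ∀ k, 1 ≤ k →
      matVec E (x k) = matVec A (x (k - 1)) + δt • (f (x (k - 1)) + g k))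
    (r : ℕ → EuclideanSpace ℝ (Fin N))
    (hr : ∀ k, r k =
      matVec A (xt (k - 1)) + δt • (f (xt (k - 1)) + g k) - matVec E (xt k))
    (e : ℕ → EuclideanSpace ℝ (Fin N))
    (he : ∀ k, e k = x k - xt k) :
    ∀ k, 1 ≤ k →
      ‖e k‖ ≤ (‖E⁻¹ * A‖ + δt * L * ‖E⁻¹‖) * ‖e (k - 1)‖ + ‖E⁻¹‖ * ‖r k‖ := by
  intro k hk
  simp only [matVec_eq_toEuclideanCLM] at hx hr
  simpa [imexResidual, he, hr, abs_of_pos hδt, ← ContinuousLinearMap.mul_def, ← map_mul,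
    l2_opNorm_toEuclideanCLM] using
    one_step_error_inequality_general (leftInverse_toEuclideanCLM_inv hE)
      (toEuclideanCLM (n := Fin N) (𝕜 := ℝ) A) δt hf (hx k hk) (xt (k - 1)) (xt k)
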